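/- arXiv:1912.12375 — 3 statements merged into one kernel-verified Lean document; each statement's English description precedes it below -/
import Mathlib

section
/- Let c : I → ℝ^6 be a solution of the Kepler–Heisenberg Hamilton equations on a maximal open interval I, with H(c(t)) = 0 for all t ∈ I and (x(t), y(t)) ≠ (0, 0) for all t ∈ I, and suppose z has consecutive zeros t₀ < t₁ < t₂. If λ = exp(s(t₂) − s(t₀)) < 1, then the orbit suffers a collision in finite future time: I is bounded above, sup I = t₀ + (t₂ − t₀)/(1 − λ²), and the position (x(t), y(t), z(t)) tends to (0, 0, 0) as t → sup I. -/
/-!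
The Kepler–Heisenberg Hamiltonian is invariant under rotations about the `z`-axis and homogeneous
of degree `-2` under Carnot dilations. Hence the angular momentum `pTheta` is conserved, the
dilational momentum `Jmom` has derivative `2H` and is conserved at zero energy, and the
transformations `sim a b` (rotation composed with dilation of factor `√(a² + b²)`) carry solutions
to solutions after rescaling time by `a² + b²` (`vf_sim`).

Along solutions `z' = turn / 2`, and at zeros of `z` zero energy forces `turn² + Jmom² = 1 / (4π)`
(`turn_sq`). So `turn` agrees up to sign at all zeros of `z`, and since the sign of `z'` alternates
along consecutive zeros (`deriv_mul_nonpos`), `turn` agrees at `t₀` and `t₂`. The values of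
`pTheta`, `Jmom` and `turn` determine a state over `z = 0` up to a similarity (`exists_sim`), so a
similarity of factor `λ` takes the state at `t₀` to the state at `t₂`.

By uniqueness of solutions and maximality this similarity maps the whole orbit into itself and
intertwines it with the time change `T t = t₂ + λ² (t - t₀)` (`self_similar`). When `λ < 1`, `T` is
a contraction with fixed point `τ = t₀ + (t₂ - t₀) / (1 - λ²)`. The quasi-norm `x² + y² + |z|` is
multiplied by `λ²` under `T`, exactly as `τ - t` is, so it is `O(τ - t)` on `[t₀, τ) ⊆ I`, while
`τ ∈ I` would force the position at `τ` to be fixed by a proper dilation (`collision`).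
-/

open Real Set

/-- The Kepler-Heisenberg Hamiltonian on phase space `ℝ^6` with coordinates
`(x, y, z, pₓ, p_y, p_z)`. -/
noncomputable def KH (x y z px py pz : ℝ) : ℝ :=
  (1/2) * ((px - (1/2) * y * pz)^2 + (py + (1/2) * x * pz)^2)
    - 1 / (8 * π * Real.sqrt ((x^2 + y^2)^2 + 16 * z^2))

/-- The adapted coordinate `s = (1/4)·log((x² + y²)² + 16z²)`. -/
noncomputable def sCoord (x y z : ℝ) : ℝ :=
  (1/4) * Real.log ((x^2 + y^2)^2 + 16 * z^2)

/-- The adapted coordinate `u = arctan(4z/(x² + y²))`. -/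
noncomputable def uCoord (x y z : ℝ) : ℝ :=
  Real.arctan (4 * z / (x^2 + y^2))

/-- The dilational momentum `J = p_s = x·pₓ + y·p_y + 2z·p_z`. -/
def Jmom (x y z px py pz : ℝ) : ℝ := x * px + y * py + 2 * z * pz

/-- The angular momentum `p_θ = x·p_y − y·pₓ`. -/
def pTheta (x y px py : ℝ) : ℝ := x * py - y * px

/-- The adapted momentum coordinate `p_u`. -/
noncomputable def pU (x y z px py pz : ℝ) : ℝ :=
  (1/4) * pz * (x^2 + y^2) - 2 * z * (x * px + y * py) / (x^2 + y^2)

/-- Rotation by angle `φ` about the `z`-axis, lifted to phase space. -/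
noncomputable def rot (φ : ℝ) (q : ℝ × ℝ × ℝ × ℝ × ℝ × ℝ) : ℝ × ℝ × ℝ × ℝ × ℝ × ℝ :=
  (q.1 * Real.cos φ - q.2.1 * Real.sin φ,
   q.1 * Real.sin φ + q.2.1 * Real.cos φ,
   q.2.2.1,
   q.2.2.2.1 * Real.cos φ - q.2.2.2.2.1 * Real.sin φ,
   q.2.2.2.1 * Real.sin φ + q.2.2.2.2.1 * Real.cos φ,
   q.2.2.2.2.2)

/-- The Carnot dilation by `λ > 0`, lifted to phase space:
`δ_λ(x, y, z, pₓ, p_y, p_z) = (λx, λy, λ²z, λ⁻¹pₓ, λ⁻¹p_y, λ⁻²p_z)`. -/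
noncomputable def dil (l : ℝ) (q : ℝ × ℝ × ℝ × ℝ × ℝ × ℝ) : ℝ × ℝ × ℝ × ℝ × ℝ × ℝ :=
  (l * q.1, l * q.2.1, l^2 * q.2.2.1,
   l⁻¹ * q.2.2.2.1, l⁻¹ * q.2.2.2.2.1, (l^2)⁻¹ * q.2.2.2.2.2)

/-- The Hamiltonian as a function on the product phase space. -/
noncomputable def KH6 (q : ℝ × ℝ × ℝ × ℝ × ℝ × ℝ) : ℝ :=
  KH q.1 q.2.1 q.2.2.1 q.2.2.2.1 q.2.2.2.2.1 q.2.2.2.2.2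

/-- `c = (x, y, z, pₓ, p_y, p_z)` is a solution of Hamilton's equations for `KH` on the
open interval `I`: each coordinate function is differentiable with derivative given by the
corresponding (signed) partial derivative of `KH`, and the position avoids the origin. -/
def IsSolutionOn (I : Set ℝ) (x y z px py pz : ℝ → ℝ) : Prop :=
  IsOpen I ∧ I.OrdConnected ∧ I.Nonempty ∧
  (∀ t ∈ I, (x t, y t, z t) ≠ (0, 0, 0)) ∧
  (∀ t ∈ I,
    HasDerivAt x (deriv (fun a => KH (x t) (y t) (z t) a (py t) (pz t)) (px t)) t ∧
    HasDerivAt y (deriv (fun a => KH (x t) (y t) (z t) (px t) a (pz t)) (py t)) t ∧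
    HasDerivAt z (deriv (fun a => KH (x t) (y t) (z t) (px t) (py t) a) (pz t)) t ∧
    HasDerivAt px (-(deriv (fun a => KH a (y t) (z t) (px t) (py t) (pz t)) (x t))) t ∧
    HasDerivAt py (-(deriv (fun a => KH (x t) a (z t) (px t) (py t) (pz t)) (y t))) t ∧
    HasDerivAt pz (-(deriv (fun a => KH (x t) (y t) a (px t) (py t) (pz t)) (z t))) t)

/-- A solution on a maximal open interval: it cannot be extended to a solution on any
strictly larger open interval. -/
def IsMaximalSolution (I : Set ℝ) (x y z px py pz : ℝ → ℝ) : Prop :=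
  IsSolutionOn I x y z px py pz ∧
  ∀ (I' : Set ℝ) (x' y' z' px' py' pz' : ℝ → ℝ),
    IsSolutionOn I' x' y' z' px' py' pz' → I ⊆ I' →
    (∀ t ∈ I, x' t = x t ∧ y' t = y t ∧ z' t = z t ∧
      px' t = px t ∧ py' t = py t ∧ pz' t = pz t) →
    I' = I

/-! ### The explicit vector field -/

/-- Phase space, as an iterated product. -/
abbrev Phase : Type := ℝ × ℝ × ℝ × ℝ × ℝ × ℝ

/-- The fourth power `(x² + y²)² + 16z²` of the Korányi-type gauge; it is positive exactly away
from the collision set. -/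
def gauge4 (q : Phase) : ℝ := (q.1 ^ 2 + q.2.1 ^ 2) ^ 2 + 16 * q.2.2.1 ^ 2

/-- The coefficient `1 / (π ρ^{3/2})` of the attracting force, with `ρ = gauge4`. -/
noncomputable def force (q : Phase) : ℝ := 1 / (π * (gauge4 q * Real.sqrt (gauge4 q)))

/-- The horizontal velocity component `A = pₓ − y p_z / 2`. -/
noncomputable def velA (q : Phase) : ℝ := q.2.2.2.1 - (1/2) * q.2.1 * q.2.2.2.2.2

/-- The horizontal velocity component `B = p_y + x p_z / 2`. -/
noncomputable def velB (q : Phase) : ℝ := q.2.2.2.2.1 + (1/2) * q.1 * q.2.2.2.2.2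

/-- The Hamiltonian vector field of `KH`, written out. -/
noncomputable def vf (q : Phase) : Phase :=
  (velA q, velB q, (1/2) * (q.1 * velB q - q.2.1 * velA q),
   -((1/2) * q.2.2.2.2.2 * velB q + (1/4) * q.1 * (q.1 ^ 2 + q.2.1 ^ 2) * force q),
   (1/2) * q.2.2.2.2.2 * velA q - (1/4) * q.2.1 * (q.1 ^ 2 + q.2.1 ^ 2) * force q,
   -(2 * q.2.2.1 * force q))

lemma gauge4_pos_iff (q : Phase) :
    0 < gauge4 q ↔ (q.1, q.2.1, q.2.2.1) ≠ ((0 : ℝ), (0 : ℝ), (0 : ℝ)) := by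
  constructor
  · intro h h0
    simp only [Prod.mk.injEq] at h0
    simp [gauge4, h0.1, h0.2.1, h0.2.2] at h
  · intro h
    by_contra hn
    apply h
    unfold gauge4 at hn
    have h1 : (q.1 ^ 2 + q.2.1 ^ 2) ^ 2 = 0 := by nlinarith [sq_nonneg (q.1 ^ 2 + q.2.1 ^ 2), sq_nonneg q.2.2.1]
    have h2 : q.2.2.1 ^ 2 = 0 := by nlinarith [sq_nonneg (q.1 ^ 2 + q.2.1 ^ 2), sq_nonneg q.2.2.1]
    have h3 := pow_eq_zero_iff (two_ne_zero) |>.1 h1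
    have hx : q.1 ^ 2 = 0 := by nlinarith [sq_nonneg q.1, sq_nonneg q.2.1]
    have hy : q.2.1 ^ 2 = 0 := by nlinarith [sq_nonneg q.1, sq_nonneg q.2.1]
    simp only [pow_eq_zero_iff two_ne_zero] at hx hy h2
    simp [hx, hy, h2]

/-- Derivative of the potential `-1/(8π√r)` along a curve on which `r` stays positive. -/
lemma hasDerivAt_potential {r : ℝ → ℝ} {r' a : ℝ} (hr : HasDerivAt r r' a) (h0 : 0 < r a) :
    HasDerivAt (fun b => 1 / (8 * π * Real.sqrt (r b)))
      (-(r' / (16 * (π * (r a * Real.sqrt (r a)))))) a := by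
  have hs : Real.sqrt (r a) ≠ 0 := (Real.sqrt_pos.2 h0).ne'
  have h8 : 8 * π * Real.sqrt (r a) ≠ 0 := by positivity
  have h : HasDerivAt (fun b => (8 * π * Real.sqrt (r b))⁻¹) _ a :=
    ((hr.sqrt h0.ne').const_mul (8 * π)).inv h8
  simp only [one_div]
  refine h.congr_deriv ?_
  have e : Real.sqrt (r a) ^ 2 = r a := Real.sq_sqrt h0.le
  generalize Real.sqrt (r a) = w at *
  rw [← e]
  field_simp
  ring

lemma partials (q : Phase) (h : 0 < gauge4 q) :
    deriv (fun a => KH q.1 q.2.1 q.2.2.1 a q.2.2.2.2.1 q.2.2.2.2.2) q.2.2.2.1 = (vf q).1 ∧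
    deriv (fun a => KH q.1 q.2.1 q.2.2.1 q.2.2.2.1 a q.2.2.2.2.2) q.2.2.2.2.1 = (vf q).2.1 ∧
    deriv (fun a => KH q.1 q.2.1 q.2.2.1 q.2.2.2.1 q.2.2.2.2.1 a) q.2.2.2.2.2 = (vf q).2.2.1 ∧
    -deriv (fun a => KH a q.2.1 q.2.2.1 q.2.2.2.1 q.2.2.2.2.1 q.2.2.2.2.2) q.1
      = (vf q).2.2.2.1 ∧
    -deriv (fun a => KH q.1 a q.2.2.1 q.2.2.2.1 q.2.2.2.2.1 q.2.2.2.2.2) q.2.1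
      = (vf q).2.2.2.2.1 ∧
    -deriv (fun a => KH q.1 q.2.1 a q.2.2.2.1 q.2.2.2.2.1 q.2.2.2.2.2) q.2.2.1
      = (vf q).2.2.2.2.2 := by
  obtain ⟨x, y, z, u, v, w⟩ := q
  simp only [gauge4] at h
  have i := fun b : ℝ => hasDerivAt_id b
  have kin : ∀ {f g : ℝ → ℝ} {f' g' b : ℝ}, HasDerivAt f f' b → HasDerivAt g g' b →
      HasDerivAt (fun a => (1/2) * (f a ^ 2 + g a ^ 2)) (f b * f' + g b * g') b := by
    intro f g f' g' b hf hg
    have := ((hf.pow 2).add (hg.pow 2)).const_mul (1/2)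
    refine this.congr_deriv ?_
    push_cast
    ring
  simp only [vf, velA, velB, force, gauge4, KH]
  refine ⟨?_, ?_, ?_, ?_, ?_, ?_⟩
  · refine ((kin ((i u).sub_const (1/2*y*w)) (hasDerivAt_const u _)).sub_const _).deriv.trans ?_
    simp
  · refine ((kin (hasDerivAt_const v _) ((i v).add_const (1/2*x*w))).sub_const _).deriv.trans ?_
    simp
  · refine ((kin (((i w).const_mul (1/2*y)).const_sub u)
      (((i w).const_mul (1/2*x)).const_add v)).sub_const _).deriv.trans ?_
    simp; ring
  · have hr : HasDerivAt (fun a : ℝ => (a^2 + y^2)^2 + 16 * z^2) (4 * x * (x^2+y^2)) x := by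
      refine ((((i x).pow 2).add_const (y^2)).pow 2 |>.add_const (16*z^2)).congr_deriv ?_
      simp; ring
    refine (congrArg Neg.neg ((kin (hasDerivAt_const x (u - 1/2*y*w))
      ((((i x).const_mul (1/2)).mul_const w).const_add v)).sub
      (hasDerivAt_potential hr h)).deriv).trans ?_
    simp
    field_simp; ring
  · have hr : HasDerivAt (fun a : ℝ => (x^2 + a^2)^2 + 16 * z^2) (4 * y * (x^2+y^2)) y := by
      refine ((((i y).pow 2).const_add (x^2)).pow 2 |>.add_const (16*z^2)).congr_deriv ?_
      simp; ring
    refine (congrArg Neg.neg ((kin ((((i y).const_mul (1/2)).mul_const w).const_sub u)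
      (hasDerivAt_const y (v + 1/2*x*w))).sub
      (hasDerivAt_potential hr h)).deriv).trans ?_
    simp
    field_simp; ring
  · have hr : HasDerivAt (fun a : ℝ => (x^2 + y^2)^2 + 16 * a^2) (32 * z) z := by
      refine ((((i z).pow 2).const_mul 16).const_add ((x^2+y^2)^2)).congr_deriv ?_
      simp; ring
    rw [(((hasDerivAt_potential hr h).const_sub _)).deriv]
    field_simp; ring

lemma hasDerivAt_phase_iff (c : ℝ → Phase) (v : Phase) (t : ℝ) :
    HasDerivAt c v t ↔
      HasDerivAt (fun t => (c t).1) v.1 t ∧ HasDerivAt (fun t => (c t).2.1) v.2.1 t ∧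
      HasDerivAt (fun t => (c t).2.2.1) v.2.2.1 t ∧
      HasDerivAt (fun t => (c t).2.2.2.1) v.2.2.2.1 t ∧
      HasDerivAt (fun t => (c t).2.2.2.2.1) v.2.2.2.2.1 t ∧
      HasDerivAt (fun t => (c t).2.2.2.2.2) v.2.2.2.2.2 t := by
  constructor
  · intro h
    have f := fun {E G : Type} [NormedAddCommGroup E] [NormedSpace ℝ E] [NormedAddCommGroup G]
      [NormedSpace ℝ G] {d : ℝ → E × G} {w : E × G} (h : HasDerivAt d w t) =>
      And.intro ((hasFDerivAt_fst (𝕜 := ℝ) (p := d t)).comp_hasDerivAt t h)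
        ((hasFDerivAt_snd (𝕜 := ℝ) (p := d t)).comp_hasDerivAt t h)
    have h1 := f h
    have h2 := f h1.2
    have h3 := f h2.2
    have h4 := f h3.2
    have h5 := f h4.2
    exact ⟨h1.1, h2.1, h3.1, h4.1, h5.1, h5.2⟩
  · rintro ⟨h1, h2, h3, h4, h5, h6⟩
    exact h1.prodMk (h2.prodMk (h3.prodMk (h4.prodMk (h5.prodMk h6))))

/-- Solutions in the sense of partial derivatives are the integral curves of `vf` that stay in the
region `gauge4 > 0`. -/
lemma isSolutionOn_iff (I : Set ℝ) (c : ℝ → Phase) :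
    IsSolutionOn I (fun t => (c t).1) (fun t => (c t).2.1) (fun t => (c t).2.2.1)
      (fun t => (c t).2.2.2.1) (fun t => (c t).2.2.2.2.1) (fun t => (c t).2.2.2.2.2) ↔
    IsOpen I ∧ I.OrdConnected ∧ I.Nonempty ∧
      ∀ t ∈ I, 0 < gauge4 (c t) ∧ HasDerivAt c (vf (c t)) t := by
  unfold IsSolutionOn
  refine and_congr_right fun _ => and_congr_right fun _ => and_congr_right fun _ => ?_
  rw [← forall₂_and]
  refine forall₂_congr fun t _ => ?_
  rw [← gauge4_pos_iff (c t)]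
  refine and_congr_right fun h => ?_
  obtain ⟨h1, h2, h3, h4, h5, h6⟩ := partials (c t) h
  rw [h1, h2, h3, h4, h5, h6, hasDerivAt_phase_iff]

/-! ### Uniqueness of solutions -/

lemma contDiffAt_vf {q : Phase} (h : 0 < gauge4 q) : ContDiffAt ℝ 1 vf q := by
  have hg : ContDiffAt ℝ 1 gauge4 q := by unfold gauge4; fun_prop
  have hf : ContDiffAt ℝ 1 force q := by
    have : π * (gauge4 q * Real.sqrt (gauge4 q)) ≠ 0 := by positivity
    exact contDiffAt_const.div (contDiffAt_const.mul (hg.mul (hg.sqrt h.ne'))) this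
  have hA : ContDiffAt ℝ 1 velA q := by unfold velA; fun_prop
  have hB : ContDiffAt ℝ 1 velB q := by unfold velB; fun_prop
  unfold vf
  fun_prop

lemma eqOn_of_integral {S : Set ℝ} (hS : S.OrdConnected) (hSo : IsOpen S) {c d : ℝ → Phase}
    (hc : ∀ t ∈ S, 0 < gauge4 (c t) ∧ HasDerivAt c (vf (c t)) t)
    (hd : ∀ t ∈ S, HasDerivAt d (vf (d t)) t)
    {a : ℝ} (ha : a ∈ S) (hcd : c a = d a) : EqOn c d S := by
  have key : ∀ t ∈ S, c t = d t → c =ᶠ[nhds t] d := by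
    intro t ht he
    obtain ⟨K, s, hs, hl⟩ := (contDiffAt_vf (hc t ht).1).exists_lipschitzOnWith
    have hSt := hSo.mem_nhds ht
    refine ODE_solution_unique_of_eventually (v := fun _ => vf) (s := fun _ => s) (K := K)
      (Filter.Eventually.of_forall fun _ => hl) ?_ ?_ he
    · filter_upwards [hSt, (hc t ht).2.continuousAt hs] with r hr hr'
      exact ⟨(hc r hr).2, hr'⟩
    · filter_upwards [hSt, (hd t ht).continuousAt (he ▸ hs)] with r hr hr'
      exact ⟨hd r hr, hr'⟩
  have hsub : S ⊆ {t | c =ᶠ[nhds t] d} := by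
    refine hS.isPreconnected.subset_of_closure_inter_subset isOpen_setOfPred_eventually_nhds
      ⟨a, ha, key a ha hcd⟩ ?_
    rintro t ⟨htc, htS⟩
    refine key t htS ?_
    -- the two curves agree frequently near `t`, hence at `t` by continuity
    have hfr : ∃ᶠ r in nhds t, c r = d r :=
      (mem_closure_iff_frequently.1 htc).mono fun r hr => hr.self_of_nhds
    by_contra hne
    have : ∀ᶠ r in nhds t, c r ≠ d r :=
      
      ((hc t htS).2.continuousAt.ne_iff_eventually_ne (hd t htS).continuousAt).1 hne
    exact hfr this
  exact fun t ht => (hsub ht).self_of_nhds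

/-! ### Similarities -/

/-- The lift to phase space of multiplication of `x + iy` by the complex number `a + ib`, composed
with the matching scaling of `z` by `a² + b²`; this is a rotation followed by a Carnot dilation of
factor `√(a² + b²)`. -/
noncomputable def sim (a b : ℝ) (q : Phase) : Phase :=
  (a * q.1 - b * q.2.1, b * q.1 + a * q.2.1, (a^2 + b^2) * q.2.2.1,
   (a * q.2.2.2.1 - b * q.2.2.2.2.1) / (a^2 + b^2),
   (b * q.2.2.2.1 + a * q.2.2.2.2.1) / (a^2 + b^2),
   q.2.2.2.2.2 / (a^2 + b^2))

lemma gauge4_sim (a b : ℝ) (q : Phase) : gauge4 (sim a b q) = (a^2 + b^2)^2 * gauge4 q := by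
  simp only [gauge4, sim]
  ring

lemma force_sim {a b : ℝ} (hab : 0 < a^2 + b^2) (q : Phase) :
    force (sim a b q) = force q / (a^2 + b^2)^3 := by
  unfold force
  rw [gauge4_sim, Real.sqrt_mul (by positivity), Real.sqrt_sq hab.le]
  rw [div_div]
  congr 1
  ring

/-- The Hamiltonian is homogeneous of degree `-2` under dilations, so similarities carry integral
curves to integral curves after rescaling time by `a² + b²`. -/
lemma vf_sim {a b : ℝ} (hab : 0 < a^2 + b^2) (q : Phase) :
    vf (sim a b q) = (a^2 + b^2)⁻¹ • sim a b (vf q) := by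
  have hne : a^2 + b^2 ≠ 0 := hab.ne'
  simp only [vf, force_sim hab]
  simp only [velA, velB, sim, Prod.smul_mk, smul_eq_mul, Prod.mk.injEq]
  refine ⟨?_, ?_, ?_, ?_, ?_, ?_⟩ <;> field_simp <;> ring

lemma hasDerivAt_sim (a b : ℝ) {c : ℝ → Phase} {v : Phase} {t : ℝ} (h : HasDerivAt c v t) :
    HasDerivAt (fun r => sim a b (c r)) (sim a b v) t := by
  rw [hasDerivAt_phase_iff] at h ⊢
  obtain ⟨h1, h2, h3, h4, h5, h6⟩ := h
  exact ⟨(h1.const_mul a).sub (h2.const_mul b), (h1.const_mul b).add (h2.const_mul a),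
    h3.const_mul _, ((h4.const_mul a).sub (h5.const_mul b)).div_const _,
    ((h4.const_mul b).add (h5.const_mul a)).div_const _, h6.div_const _⟩

/-! ### Conserved momenta and the return map at zeros of `z` -/

lemma eq_of_deriv_zero {S : Set ℝ} (hS : S.OrdConnected) {f : ℝ → ℝ}
    (hf : ∀ t ∈ S, HasDerivAt f 0 t) {r t : ℝ} (hr : r ∈ S) (ht : t ∈ S) : f r = f t := by
  have hc : Convex ℝ S := hS.convex
  have := hc.norm_image_sub_le_of_norm_hasDerivWithin_le (f := f) (f' := fun _ => 0) (C := 0)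
    (fun u hu => (hf u hu).hasDerivWithinAt) (by simp) hr ht
  simp only [zero_mul, norm_le_zero_iff, sub_eq_zero] at this
  exact this.symm

lemma pTheta_conserved {c : ℝ → Phase} {t : ℝ} (h : HasDerivAt c (vf (c t)) t) :
    HasDerivAt (fun r => pTheta (c r).1 (c r).2.1 (c r).2.2.2.1 (c r).2.2.2.2.1) 0 t := by
  rw [hasDerivAt_phase_iff] at h
  obtain ⟨h1, h2, h3, h4, h5, h6⟩ := h
  refine ((h1.mul h5).sub (h2.mul h4)).congr_deriv ?_
  simp only [vf, velA, velB]
  ring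

lemma KH_eq (q : Phase) : KH q.1 q.2.1 q.2.2.1 q.2.2.2.1 q.2.2.2.2.1 q.2.2.2.2.2 =
    (1/2) * (velA q ^ 2 + velB q ^ 2) - 1 / (8 * π * Real.sqrt (gauge4 q)) := rfl

/-- The dilational momentum has derivative `2 H`, hence is constant at zero energy. -/
lemma Jmom_conserved {c : ℝ → Phase} {t : ℝ} (h0 : 0 < gauge4 (c t))
    (h : HasDerivAt c (vf (c t)) t)
    (hH : KH (c t).1 (c t).2.1 (c t).2.2.1 (c t).2.2.2.1 (c t).2.2.2.2.1 (c t).2.2.2.2.2 = 0) :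
    HasDerivAt (fun r => Jmom (c r).1 (c r).2.1 (c r).2.2.1 (c r).2.2.2.1 (c r).2.2.2.2.1
      (c r).2.2.2.2.2) 0 t := by
  rw [hasDerivAt_phase_iff] at h
  obtain ⟨h1, h2, h3, h4, h5, h6⟩ := h
  refine (((h1.mul h4).add (h2.mul h5)).add ((h3.const_mul 2).mul h6)).congr_deriv ?_
  have hs : Real.sqrt (gauge4 (c t)) ≠ 0 := (Real.sqrt_pos.2 h0).ne'
  have hF : gauge4 (c t) * force (c t) = 1 / (π * Real.sqrt (gauge4 (c t))) := by
    unfold force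
    field_simp
  have hH2 : 4 * (velA (c t) ^ 2 + velB (c t) ^ 2) = 1 / (π * Real.sqrt (gauge4 (c t))) := by
    rw [KH_eq] at hH
    have : 1 / (8 * π * Real.sqrt (gauge4 (c t))) = (1 / 8) * (1 / (π * Real.sqrt (gauge4 (c t)))) := by
      field_simp
    linarith
  rw [← hF] at hH2
  simp only [vf]
  simp only [gauge4] at hH2
  simp only [velA, velB] at *
  linear_combination (1 / 4) * hH2

/-- Between consecutive zeros the end derivatives have opposite (weak) signs. -/
lemma deriv_mul_nonpos {f : ℝ → ℝ} {a b u v : ℝ} (hab : a < b) (hf : ContinuousOn f (Icc a b))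
    (hfa : f a = 0) (hfb : f b = 0) (hne : ∀ t, a < t → t < b → f t ≠ 0)
    (hu : HasDerivAt f u a) (hv : HasDerivAt f v b) : u * v ≤ 0 := by
  have pos : ∀ (g : ℝ → ℝ) (u v : ℝ), g a = 0 → g b = 0 → HasDerivAt g u a → HasDerivAt g v b →
      (∀ t ∈ Ioo a b, 0 < g t) → u * v ≤ 0 := by
    intro g u v ga gb hu hv hg
    have h1 : 0 ≤ u := by
      refine ge_of_tendsto ((hasDerivWithinAt_iff_tendsto_slope' (by simp)).1
        (hu.hasDerivWithinAt (s := Ioi a))) ?_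
      filter_upwards [Ioo_mem_nhdsGT hab] with t ht
      rw [slope_def_field, ga]
      have := hg t ht
      have := ht.1
      apply div_nonneg <;> linarith
    have h2 : v ≤ 0 := by
      refine le_of_tendsto ((hasDerivWithinAt_iff_tendsto_slope' (by simp)).1
        (hv.hasDerivWithinAt (s := Iio b))) ?_
      filter_upwards [Ioo_mem_nhdsLT hab] with t ht
      rw [slope_def_field, gb]
      have := hg t ht
      have := ht.2
      apply div_nonpos_of_nonneg_of_nonpos <;> linarith
    exact mul_nonpos_of_nonneg_of_nonpos h1 h2
  have hco : ContinuousOn f (Ioo a b) := hf.mono Ioo_subset_Icc_self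
  by_cases hp : ∀ t ∈ Ioo a b, 0 < f t
  · exact pos f u v hfa hfb hu hv hp
  · push Not at hp
    obtain ⟨r, hr, hr0⟩ := hp
    have hn : ∀ t ∈ Ioo a b, 0 < -f t := by
      intro t ht
      by_contra hcon
      push Not at hcon
      obtain ⟨w, hw, hw0⟩ := isPreconnected_Ioo.intermediate_value hr ht hco
        (show (0:ℝ) ∈ Icc (f r) (f t) from ⟨hr0, by linarith⟩)
      exact hne w hw.1 hw.2 hw0
    have := pos (fun t => -f t) (-u) (-v) (by simp [hfa]) (by simp [hfb]) hu.neg hv.neg hn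
    linarith [neg_mul_neg u v]

/-- The quantity `x B − y A`; along solutions `z'` is half of it. -/
noncomputable def turn (q : Phase) : ℝ := q.1 * velB q - q.2.1 * velA q

/-- On `z = 0` at zero energy, `turn` is determined up to sign by the dilational momentum. -/
lemma turn_sq (q : Phase) (h0 : 0 < gauge4 q) (hz : q.2.2.1 = 0)
    (hH : KH q.1 q.2.1 q.2.2.1 q.2.2.2.1 q.2.2.2.2.1 q.2.2.2.2.2 = 0) :
    turn q ^ 2 + Jmom q.1 q.2.1 q.2.2.1 q.2.2.2.1 q.2.2.2.2.1 q.2.2.2.2.2 ^ 2 = 1 / (4 * π) := by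
  have hg : gauge4 q = (q.1^2 + q.2.1^2)^2 := by simp [gauge4, hz]
  rw [KH_eq, hg, Real.sqrt_sq (by positivity)] at hH
  rw [hg] at h0
  have hr : q.1^2 + q.2.1^2 ≠ 0 := by
    intro h
    simp [h] at h0
  have e : turn q ^ 2 + Jmom q.1 q.2.1 q.2.2.1 q.2.2.2.1 q.2.2.2.2.1 q.2.2.2.2.2 ^ 2
      = (q.1^2 + q.2.1^2) * (velA q ^ 2 + velB q ^ 2) := by
    simp only [turn, Jmom, velA, velB, hz]
    ring
  have e2 : velA q ^ 2 + velB q ^ 2 = 2 * (1 / (8 * π * (q.1^2 + q.2.1^2))) := by linarith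
  rw [e, e2]
  field_simp
  ring

/-- Two states over `z = 0` with the same angular momentum, dilational momentum and `turn` differ
by a similarity. -/
lemma exists_sim {p q : Phase} (hp : p.2.2.1 = 0) (hq : q.2.2.1 = 0)
    (hp0 : 0 < p.1^2 + p.2.1^2) (hq0 : 0 < q.1^2 + q.2.1^2)
    (hth : pTheta p.1 p.2.1 p.2.2.2.1 p.2.2.2.2.1 = pTheta q.1 q.2.1 q.2.2.2.1 q.2.2.2.2.1)
    (hJ : Jmom p.1 p.2.1 p.2.2.1 p.2.2.2.1 p.2.2.2.2.1 p.2.2.2.2.2 =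
      Jmom q.1 q.2.1 q.2.2.1 q.2.2.2.1 q.2.2.2.2.1 q.2.2.2.2.2)
    (hT : turn p = turn q) :
    ∃ a b : ℝ, a^2 + b^2 = (q.1^2 + q.2.1^2) / (p.1^2 + p.2.1^2) ∧ sim a b p = q := by
  obtain ⟨x, y, z, u, v, w⟩ := p
  obtain ⟨x', y', z', u', v', w'⟩ := q
  simp only [turn, velA, velB, pTheta, Jmom] at *
  subst hp hq
  -- `a + ib` is the complex quotient `(x' + iy') / (x + iy)`
  have hn : (x * x' + y * y')^2 + (x * y' - y * x')^2 = (x^2+y^2) * (x'^2+y'^2) := by ring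
  have hpn := hp0.ne'
  have hqn := hq0.ne'
  have hab : ((x * x' + y * y') / (x^2+y^2))^2 + ((x * y' - y * x') / (x^2+y^2))^2
      = (x'^2+y'^2) / (x^2+y^2) := by
    rw [div_pow, div_pow, ← add_div, hn]
    field_simp
  refine ⟨(x * x' + y * y') / (x^2+y^2), (x * y' - y * x') / (x^2+y^2), hab, ?_⟩
  have hw : w * (x^2+y^2) = w' * (x'^2+y'^2) := by linear_combination 2 * hT - 2 * hth
  simp only [sim, hab, Prod.mk.injEq]
  refine ⟨?_, ?_, by simp, ?_, ?_, ?_⟩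
  · field_simp; ring
  · field_simp; ring
  · field_simp
    linear_combination x' * hJ - y' * hth
  · field_simp
    linear_combination y' * hJ + x' * hth
  · field_simp
    linear_combination hw

/-! ### Self-similarity and collision -/

/-- Integral curve of the Hamiltonian vector field on an open interval. -/
def IsIntegralOn (I : Set ℝ) (c : ℝ → Phase) : Prop :=
  IsOpen I ∧ I.OrdConnected ∧ I.Nonempty ∧
    ∀ t ∈ I, 0 < gauge4 (c t) ∧ HasDerivAt c (vf (c t)) t

lemma IsIntegralOn.glue {I J : Set ℝ} {c d : ℝ → Phase} (hc : IsIntegralOn I c) (hd : IsIntegralOn J d)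
    {a : ℝ} (haI : a ∈ I) (haJ : a ∈ J) (hcd : c a = d a) :
    ∃ e : ℝ → Phase, IsIntegralOn (I ∪ J) e ∧ EqOn e c I ∧ EqOn e d J := by
  classical
  obtain ⟨hIo, hIc, -, hcI⟩ := hc
  obtain ⟨hJo, hJc, -, hdJ⟩ := hd
  have heq : EqOn c d (I ∩ J) :=
    eqOn_of_integral (hIc.inter hJc) (hIo.inter hJo) (fun t ht => hcI t ht.1)
      (fun t ht => (hdJ t ht.2).2) ⟨haI, haJ⟩ hcd
  let e : ℝ → Phase := fun t => if t ∈ I then c t else d t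
  have heI : EqOn e c I := fun t ht => if_pos ht
  have heJ : EqOn e d J := by
    intro t ht
    by_cases h : t ∈ I
    · exact (heI h).trans (heq ⟨h, ht⟩)
    · exact if_neg h
  refine ⟨e, ⟨hIo.union hJo, ?_, ⟨a, Or.inl haI⟩, ?_⟩, heI, heJ⟩
  · exact (IsPreconnected.union a haI haJ hIc.isPreconnected hJc.isPreconnected).ordConnected
  · rintro t (ht | ht)
    · rw [heI ht]
      exact ⟨(hcI t ht).1, (hcI t ht).2.congr_of_eventuallyEq
        (heI.eventuallyEq_of_mem (hIo.mem_nhds ht))⟩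
    · rw [heJ ht]
      exact ⟨(hdJ t ht).1, (hdJ t ht).2.congr_of_eventuallyEq
        (heJ.eventuallyEq_of_mem (hJo.mem_nhds ht))⟩

/-- If a similarity maps the state at `t₀` to the state at `t₂`, then it maps the whole maximal
orbit into itself, intertwining it with an affine contraction or expansion of time. -/
lemma self_similar {I : Set ℝ} {c : ℝ → Phase} (hc : IsIntegralOn I c)
    (hmax : ∀ I' d, IsIntegralOn I' d → I ⊆ I' → EqOn d c I → I' = I)
    {t₀ t₂ a b : ℝ} (ht₀ : t₀ ∈ I) (ht₂ : t₂ ∈ I) (hab : 0 < a^2 + b^2)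
    (hs : sim a b (c t₀) = c t₂) {t : ℝ} (ht : t ∈ I) :
    t₂ + (a^2 + b^2) * (t - t₀) ∈ I ∧
      c (t₂ + (a^2 + b^2) * (t - t₀)) = sim a b (c t) := by
  set k := a^2 + b^2 with hk
  -- the inverse time change
  let g : ℝ → ℝ := fun r => t₀ + (r - t₂) / k
  have hg : ∀ r, HasDerivAt g k⁻¹ r := fun r =>
    ((((hasDerivAt_id r).sub_const t₂).div_const k).const_add t₀).congr_deriv (by simp)
  have hgc : Continuous g := continuous_iff_continuousAt.2 fun r => (hg r).continuousAt
  have hgm : Monotone g := by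
    intro r s hrs
    have : (r - t₂) / k ≤ (s - t₂) / k := by gcongr
    simp only [g]
    linarith
  have hg2 : g t₂ = t₀ := by simp [g]
  have hgt : g (t₂ + k * (t - t₀)) = t := by
    simp only [g]
    field_simp
    ring
  have hd : IsIntegralOn (g ⁻¹' I) (fun r => sim a b (c (g r))) := by
    refine ⟨hc.1.preimage hgc, hc.2.1.preimage_mono hgm, ⟨t₂, by simpa [hg2] using ht₀⟩, ?_⟩
    intro r hr
    obtain ⟨h1, h2⟩ := hc.2.2.2 (g r) hr
    refine ⟨?_, ?_⟩
    · rw [gauge4_sim]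
      positivity
    · have h3 := (hasDerivAt_sim a b h2).scomp r (hg r)
      rw [vf_sim hab]
      exact h3
  obtain ⟨e, he, heI, heJ⟩ := hc.glue hd ht₂ (show g t₂ ∈ I by rwa [hg2])
    (by simp only [hg2, hs])
  have hI := hmax _ e he subset_union_left heI
  have hmem : t₂ + k * (t - t₀) ∈ g ⁻¹' I := by
    rw [mem_preimage, hgt]
    exact ht
  have hmI : t₂ + k * (t - t₀) ∈ I := hI ▸ Or.inr hmem
  refine ⟨hmI, ?_⟩
  rw [← heI hmI, heJ hmem]
  simp only [hgt]

/-- A maximal orbit with a contracting self-similarity dies at the fixed point `τ` of the induced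
time change, the position being `O(τ - t)` in the quasi-norm `x² + y² + |z|`. -/
lemma collision {I : Set ℝ} {c : ℝ → Phase} (hc : IsIntegralOn I c)
    {t₀ t₂ a b τ : ℝ} (ht₀ : t₀ ∈ I) (ht₂ : t₂ ∈ I) (h02 : t₀ < t₂) (hab : 0 < a^2 + b^2)
    (hab1 : a^2 + b^2 < 1) (hτ : τ - t₂ = (a^2 + b^2) * (τ - t₀))
    (hss : ∀ t ∈ I, t₂ + (a^2 + b^2) * (t - t₀) ∈ I ∧
      c (t₂ + (a^2 + b^2) * (t - t₀)) = sim a b (c t)) :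
    IsLUB I τ ∧ ∃ C : ℝ, ∀ t ∈ I, t₀ ≤ t →
      (c t).1^2 + (c t).2.1^2 + |(c t).2.2.1| ≤ C * (τ - t) := by
  set k := a^2 + b^2 with hk
  have hτ0 : t₀ < τ := by
    by_contra hcon
    push Not at hcon
    nlinarith
  have hτ2 : t₂ < τ := by
    have : 0 < k * (τ - t₀) := mul_pos hab (by linarith)
    linarith
  let h : ℝ → ℝ := fun t => (c t).1^2 + (c t).2.1^2 + |(c t).2.2.1|
  have hh : ∀ t ∈ I, h (t₂ + k * (t - t₀)) = k * h t := by
    intro t ht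
    simp only [h, (hss t ht).2, sim]
    rw [abs_mul, abs_of_pos hab, hk]
    ring
  have hcont : ContinuousOn h (Icc t₀ t₂) := by
    intro t ht
    have hct := (hc.2.2.2 t (hc.2.1.out ht₀ ht₂ ht)).2.continuousAt
    refine ContinuousAt.continuousWithinAt ?_
    simp only [h]
    fun_prop
  obtain ⟨M, hM⟩ := isCompact_Icc.bddAbove_image hcont
  have hM : ∀ t ∈ Icc t₀ t₂, h t ≤ M := fun t ht => hM (mem_image_of_mem h ht)
  have h_nonneg : ∀ t, 0 ≤ h t := fun t => by positivity
  have hM0 : 0 ≤ M := (h_nonneg t₀).trans (hM t₀ ⟨le_rfl, h02.le⟩)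
  -- `h t / (τ - t)` is invariant under the time change, so the bound on `[t₀, t₂]` propagates
  set C := M / (τ - t₂) with hC
  have hC0 : 0 ≤ C := div_nonneg hM0 (by linarith)
  have step : ∀ n : ℕ, ∀ t, t₀ ≤ t → t ≤ τ - k^n * (τ - t₂) → t ∈ I ∧ h t ≤ C * (τ - t) := by
    have base : ∀ t, t₀ ≤ t → t ≤ t₂ → t ∈ I ∧ h t ≤ C * (τ - t) := by
      intro t h1 h2
      refine ⟨hc.2.1.out ht₀ ht₂ ⟨h1, h2⟩, (hM t ⟨h1, h2⟩).trans ?_⟩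
      have : M = C * (τ - t₂) := by
        rw [hC]
        field_simp [(sub_pos.2 hτ2).ne']
      rw [this]
      gcongr
    intro n
    induction n with
    | zero =>
      intro t h1 h2
      exact base t h1 (by simpa using h2)
    | succ n ih =>
      intro t h1 h2
      by_cases h3 : t ≤ t₂
      · exact base t h1 h3
      push Not at h3
      obtain ⟨r, hr⟩ : ∃ r, t = t₂ + k * (r - t₀) := ⟨t₀ + (t - t₂) / k, by field_simp; ring⟩
      have hr0 : t₀ ≤ r := by
        by_contra hcon
        push Not at hcon
        have : 0 < k * (t₀ - r) := mul_pos hab (by linarith)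
        linarith
      have hr1 : r ≤ τ - k^n * (τ - t₂) := by
        have e : k * (r - (τ - k^n * (τ - t₂))) = t - (τ - k^(n+1) * (τ - t₂)) := by
          rw [hr, pow_succ]
          linear_combination hτ
        by_contra hcon
        push Not at hcon
        have : 0 < k * (r - (τ - k^n * (τ - t₂))) := mul_pos hab (by linarith)
        linarith
      obtain ⟨hrI, hrC⟩ := ih r hr0 hr1
      rw [hr]
      refine ⟨(hss r hrI).1, ?_⟩
      rw [hh r hrI]
      calc k * h r ≤ k * (C * (τ - r)) := by gcongr
        _ = C * (τ - (t₂ + k * (r - t₀))) := by linear_combination (-C) * hτ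
  have all : ∀ t, t₀ ≤ t → t < τ → t ∈ I ∧ h t ≤ C * (τ - t) := by
    intro t h1 h2
    obtain ⟨n, hn⟩ := exists_pow_lt_of_lt_one
      (div_pos (sub_pos.2 h2) (sub_pos.2 hτ2)) hab1
    rw [lt_div_iff₀ (sub_pos.2 hτ2)] at hn
    exact step n t h1 (by linarith)
  -- at the fixed point the gauge would be fixed by a proper contraction
  have hτI : τ ∉ I := by
    intro hmem
    have h1 := (hc.2.2.2 τ hmem).1
    have h2 := (hss τ hmem).2
    have e : t₂ + k * (τ - t₀) = τ := by linarith
    rw [e] at h2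
    have h3 := gauge4_sim a b (c τ)
    rw [← h2, ← hk] at h3
    have : k^2 < 1 := by nlinarith
    nlinarith
  have hlt : ∀ t ∈ I, t < τ := by
    intro t ht
    by_contra hcon
    push Not at hcon
    exact hτI (hc.2.1.out ht₀ ht ⟨hτ0.le, hcon⟩)
  refine ⟨⟨fun t ht => (hlt t ht).le, ?_⟩, C, fun t ht h1 => (all t h1 (hlt t ht)).2⟩
  intro u hu
  by_contra hcon
  push Not at hcon
  have hu0 := hu ht₀
  have := hu (all ((u + τ) / 2) (by linarith) (by linarith)).1
  linarith

lemma exp_sCoord_sq {p q : Phase} (hp : p.2.2.1 = 0) (hq : q.2.2.1 = 0)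
    (hp0 : 0 < p.1^2 + p.2.1^2) (hq0 : 0 < q.1^2 + q.2.1^2) :
    Real.exp (sCoord q.1 q.2.1 q.2.2.1 - sCoord p.1 p.2.1 p.2.2.1) ^ 2 =
      (q.1^2 + q.2.1^2) / (p.1^2 + p.2.1^2) := by
  have e : ∀ w : ℝ, (w^2 + 16 * (0:ℝ)^2) = w^2 := fun w => by ring
  rw [← Real.exp_nat_mul]
  simp only [sCoord, hp, hq, e, Real.log_pow]
  rw [← Real.exp_log hq0, ← Real.exp_log hp0, ← Real.exp_sub]
  simp only [Real.log_exp]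
  congr 1
  push_cast
  ring

lemma tendsto_zero_of_bound {x y z : ℝ → ℝ} {I : Set ℝ} {τ C : ℝ}
    (hev : ∀ᶠ t in nhdsWithin τ I, x t^2 + y t^2 + |z t| ≤ C * (τ - t)) :
    Filter.Tendsto (fun t => (x t, y t, z t)) (nhdsWithin τ I)
      (nhds ((0 : ℝ), (0 : ℝ), (0 : ℝ))) := by
  have hlim : Filter.Tendsto (fun t => C * (τ - t)) (nhdsWithin τ I) (nhds 0) := by
    have : ContinuousAt (fun t => C * (τ - t)) τ := by fun_prop
    simpa using this.tendsto.mono_left nhdsWithin_le_nhds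
  have hsqrt : Filter.Tendsto (fun t => Real.sqrt (C * (τ - t))) (nhdsWithin τ I) (nhds 0) := by
    simpa using hlim.sqrt
  refine Filter.Tendsto.prodMk_nhds ?_ (Filter.Tendsto.prodMk_nhds ?_ ?_)
  · refine squeeze_zero_norm' (hev.mono fun t ht => ?_) hsqrt
    exact Real.abs_le_sqrt (by linarith [sq_nonneg (y t), abs_nonneg (z t)])
  · refine squeeze_zero_norm' (hev.mono fun t ht => ?_) hsqrt
    exact Real.abs_le_sqrt (by linarith [sq_nonneg (x t), abs_nonneg (z t)])
  · refine squeeze_zero_norm' (hev.mono fun t ht => ?_) hlim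
    rw [Real.norm_eq_abs]
    linarith [sq_nonneg (x t), sq_nonneg (y t)]

/-- **Corollary (finite-time collision).** If the dilation factor satisfies `λ < 1`, then a
maximal zero-energy orbit collides in finite future time: `I` is bounded above,
`sup I = t₀ + (t₂ − t₀)/(1 − λ²)`, and the position tends to the origin as `t → sup I`. -/
theorem kepler_heisenberg_finite_time_collision
    (I : Set ℝ) (x y z px py pz : ℝ → ℝ) (t₀ t₁ t₂ : ℝ)
    (hsol : IsMaximalSolution I x y z px py pz)
    (hH : ∀ t ∈ I, KH (x t) (y t) (z t) (px t) (py t) (pz t) = 0)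
    (hxy : ∀ t ∈ I, (x t, y t) ≠ (0, 0))
    (ht01 : t₀ < t₁) (ht12 : t₁ < t₂)
    (ht₀I : t₀ ∈ I) (ht₁I : t₁ ∈ I) (ht₂I : t₂ ∈ I)
    (hz₀ : z t₀ = 0) (hz₁ : z t₁ = 0) (hz₂ : z t₂ = 0)
    (hconsec : ∀ t, ((t₀ < t ∧ t < t₁) ∨ (t₁ < t ∧ t < t₂)) → z t ≠ 0)
    (lam : ℝ)
    (hlam : lam = Real.exp (sCoord (x t₂) (y t₂) (z t₂) - sCoord (x t₀) (y t₀) (z t₀)))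
    (hlam1 : lam < 1) :
    BddAbove I ∧ sSup I = t₀ + (t₂ - t₀) / (1 - lam^2) ∧
      Filter.Tendsto (fun t => (x t, y t, z t)) (nhdsWithin (sSup I) I)
        (nhds ((0 : ℝ), (0 : ℝ), (0 : ℝ))) := by
  let c : ℝ → Phase := fun t => (x t, y t, z t, px t, py t, pz t)
  have hc : IsIntegralOn I c := (isSolutionOn_iff I c).1 hsol.1
  have hmax : ∀ I' d, IsIntegralOn I' d → I ⊆ I' → EqOn d c I → I' = I := by
    intro I' d hd hII' heq
    refine hsol.2 I' _ _ _ _ _ _ ((isSolutionOn_iff I' d).2 hd) hII' fun t ht => ?_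
    rw [heq ht]
    exact ⟨rfl, rfl, rfl, rfl, rfl, rfl⟩
  have hder : ∀ t ∈ I, HasDerivAt c (vf (c t)) t := fun t ht => (hc.2.2.2 t ht).2
  have hpos : ∀ t ∈ I, 0 < gauge4 (c t) := fun t ht => (hc.2.2.2 t ht).1
  have hz' : ∀ t ∈ I, HasDerivAt z ((1/2) * turn (c t)) t := fun t ht =>
    ((hasDerivAt_phase_iff c _ t).1 (hder t ht)).2.2.1
  have hth := eq_of_deriv_zero hc.2.1 (fun t ht => pTheta_conserved (hder t ht)) ht₀I ht₂I
  have hJ : ∀ r ∈ I, ∀ t ∈ I, _ = _ := fun r hr t ht => eq_of_deriv_zero hc.2.1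
    (fun t ht => Jmom_conserved (hpos t ht) (hder t ht) (hH t ht)) hr ht
  have hsq0 := turn_sq (c t₀) (hpos _ ht₀I) hz₀ (hH _ ht₀I)
  have hsq1 := turn_sq (c t₁) (hpos _ ht₁I) hz₁ (hH _ ht₁I)
  have hsq2 := turn_sq (c t₂) (hpos _ ht₂I) hz₂ (hH _ ht₂I)
  have hJ01 := hJ t₀ ht₀I t₁ ht₁I
  have hJ02 := hJ t₀ ht₀I t₂ ht₂I
  rw [← hJ01] at hsq1
  rw [← hJ02] at hsq2
  have hzc : ∀ {r s : ℝ}, r ∈ I → s ∈ I → ContinuousOn z (Icc r s) := fun hr hs t ht =>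
    (hz' t (hc.2.1.out hr hs ht)).continuousAt.continuousWithinAt
  have hs01 := deriv_mul_nonpos ht01 (hzc ht₀I ht₁I) hz₀ hz₁
    (fun t h1 h2 => hconsec t (Or.inl ⟨h1, h2⟩)) (hz' _ ht₀I) (hz' _ ht₁I)
  have hs12 := deriv_mul_nonpos ht12 (hzc ht₁I ht₂I) hz₁ hz₂
    (fun t h1 h2 => hconsec t (Or.inr ⟨h1, h2⟩)) (hz' _ ht₁I) (hz' _ ht₂I)
  -- `turn` takes the values `±w` at the three zeros, and its sign changes at each step
  have hT : turn (c t₀) = turn (c t₂) := by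
    have e01 : turn (c t₀) ^ 2 = turn (c t₁) ^ 2 := by linarith
    have e02 : turn (c t₀) ^ 2 = turn (c t₂) ^ 2 := by linarith
    rcases sq_eq_sq_iff_eq_or_eq_neg.1 e02 with h | h
    · exact h
    rcases sq_eq_sq_iff_eq_or_eq_neg.1 e01 with h' | h'
    · rw [← h'] at hs01
      have : turn (c t₀) = 0 := by nlinarith
      linarith
    · rw [show turn (c t₁) = turn (c t₂) by linarith] at hs12
      have : turn (c t₂) = 0 := by nlinarith
      linarith
  have hr : ∀ t ∈ I, z t = 0 → 0 < (c t).1^2 + (c t).2.1^2 := by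
    intro t ht hzt
    have h := hpos t ht
    have h2 : gauge4 (c t) = ((c t).1^2 + (c t).2.1^2)^2 := by simp [gauge4, c, hzt]
    rw [h2] at h
    exact lt_of_le_of_ne (by positivity) fun h0 => by simp [← h0] at h
  obtain ⟨a, b, hab, hsim⟩ := exists_sim (p := c t₀) (q := c t₂) hz₀ hz₂ (hr _ ht₀I hz₀)
    (hr _ ht₂I hz₂) hth hJ02 hT
  have hk : a^2 + b^2 = lam^2 := by
    rw [hab, hlam]
    exact (exp_sCoord_sq (p := c t₀) (q := c t₂) hz₀ hz₂ (hr _ ht₀I hz₀) (hr _ ht₂I hz₂)).symm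
  have hlam0 : 0 < lam := hlam ▸ Real.exp_pos _
  have hk0 : 0 < a^2 + b^2 := hk ▸ pow_pos hlam0 2
  have hk1 : a^2 + b^2 < 1 := by rw [hk]; nlinarith
  obtain ⟨hlub, C, hC⟩ := collision (τ := t₀ + (t₂ - t₀) / (1 - lam^2)) hc ht₀I ht₂I
    (ht01.trans ht12) hk0 hk1
    (by
      have : 1 - lam^2 ≠ 0 := by rw [← hk]; linarith
      rw [hk]
      field_simp
      ring)
    (fun t ht => self_similar hc hmax ht₀I ht₂I hk0 hsim ht)
  have hsup : sSup I = t₀ + (t₂ - t₀) / (1 - lam^2) := hlub.csSup_eq ⟨t₀, ht₀I⟩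
  refine ⟨hlub.bddAbove, hsup, ?_⟩
  rw [← hsup] at hC hlub
  set τ := sSup I
  have hτ0 : t₀ < τ := (ht01.trans ht12).trans_le (hlub.1 ht₂I)
  have hev : ∀ᶠ t in nhdsWithin τ I, x t^2 + y t^2 + |z t| ≤ C * (τ - t) := by
    filter_upwards [self_mem_nhdsWithin, mem_nhdsWithin_of_mem_nhds (Ioi_mem_nhds hτ0)] with t ht h1
    exact hC t ht (le_of_lt h1)
  exact tendsto_zero_of_bound hev
end

section
/- The adapted coordinates are canonical: on the open set U = {(x, y, z, p_x, p_y, p_z) ∈ ℝ^6 : x > 0}, the map Φ(x, y, z, p_x, p_y, p_z) = (s, θ, u, p_s, p_θ, p_u), where θ = arctan(y/x) and s, u, p_s, p_θ, p_u are the adapted coordinate functions, is differentiable and its derivative DΦ(q) at every q ∈ U satisfies DΦ(q)ᵀ · Ω · DΦ(q) = Ω, where Ω is the 6×6 block matrix [[0, I₃], [−I₃, 0]] representing the canonical symplectic form pairing the three position coordinates with the three momentum coordinates. -/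
/-! The position part `(s, θ, u)` of `Phi` depends on `(x, y, z)` only; write `A` for its `3 × 3`
Jacobian. The momenta are the cotangent lift of this change of positions, that is
`(pₓ, p_y, p_z) = Aᵀ (p_s, p_θ, p_u)`, so `Phi` pulls the tautological one-form back to itself and is
therefore symplectic. With `r = x² + y²` and `D = r² + 16z²` every entry of the full Jacobian is a
rational function with denominators `r` and `D`, both positive where `x > 0`. The proof computes
this Jacobian (`hasFDerivAt_Phi`) and checks the identity `DΦᵀ Ω DΦ = Ω` entry by entry
(`jacPhi_symplectic`). -/

open Real Set

/-- The standard symplectic matrix `Ω = [[0, I₃], [−I₃, 0]]` on `ℝ^6`, pairing the three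
position coordinates with the three momentum coordinates. -/
def Omega6 : Matrix (Fin 6) (Fin 6) ℝ :=
  Matrix.of fun i j =>
    if (i : ℕ) + 3 = (j : ℕ) then 1 else if (j : ℕ) + 3 = (i : ℕ) then -1 else 0

/-- The adapted coordinate map `Φ(x, y, z, pₓ, p_y, p_z) = (s, θ, u, p_s, p_θ, p_u)`,
with `θ = arctan(y/x)`. -/
noncomputable def Phi (q : Fin 6 → ℝ) : Fin 6 → ℝ :=
  ![sCoord (q 0) (q 1) (q 2),
    Real.arctan (q 1 / q 0),
    uCoord (q 0) (q 1) (q 2),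
    Jmom (q 0) (q 1) (q 2) (q 3) (q 4) (q 5),
    pTheta (q 0) (q 1) (q 3) (q 4),
    pU (q 0) (q 1) (q 2) (q 3) (q 4) (q 5)]

/-- The Jacobian matrix of `Phi` in closed form. The arguments `r`, `D`, `ρ` stand for `x² + y²`,
`r² + 16z²` and `x·pₓ + y·p_y`; they are kept as separate variables so that denominators can be
cleared before these values are substituted. Rows are indexed by `(s, θ, u, p_s, p_θ, p_u)` and columns by
`(x, y, z, pₓ, p_y, p_z)`. -/
noncomputable def jacPhi (x y z px py pz r D ρ : ℝ) : Matrix (Fin 6) (Fin 6) ℝ :=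
  !![r * x / D, r * y / D, 8 * z / D, 0, 0, 0;
     -y / r, x / r, 0, 0, 0, 0;
     -8 * z * x / D, -8 * z * y / D, 4 * r / D, 0, 0, 0;
     px, py, 2 * pz, x, y, 2 * z;
     py, -px, 0, -y, x, 0;
     pz * x / 2 - 2 * z * (px / r - 2 * x * ρ / r ^ 2),
     pz * y / 2 - 2 * z * (py / r - 2 * y * ρ / r ^ 2),
     -2 * ρ / r, -2 * z * x / r, -2 * z * y / r, r / 4]

theorem hasFDerivAt_quotient {E : Type*} [NormedAddCommGroup E] [NormedSpace ℝ E] {f g : E → ℝ}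
    {f' g' : E →L[ℝ] ℝ} {q : E} (hf : HasFDerivAt f f' q) (hg : HasFDerivAt g g' q)
    (h0 : g q ≠ 0) :
    HasFDerivAt (fun p => f p / g p) ((g q ^ 2)⁻¹ • (g q • f' - f q • g')) q := by
  have h := hf.mul ((hasDerivAt_inv h0).comp_hasFDerivAt q hg)
  simp only [div_eq_mul_inv]
  refine h.congr_fderiv ?_
  ext v
  simp
  field_simp
  ring

theorem hasFDerivAt_Phi (q : Fin 6 → ℝ) (hq : 0 < q 0) :
    HasFDerivAt Phi
      (Matrix.toLin' (jacPhi (q 0) (q 1) (q 2) (q 3) (q 4) (q 5) (q 0 ^ 2 + q 1 ^ 2)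
        ((q 0 ^ 2 + q 1 ^ 2) ^ 2 + 16 * q 2 ^ 2)
        (q 0 * q 3 + q 1 * q 4))).toContinuousLinearMap q := by
  have hx : q 0 ≠ 0 := hq.ne'
  have hr : q 0 ^ 2 + q 1 ^ 2 ≠ 0 := by positivity
  have hD : (q 0 ^ 2 + q 1 ^ 2) ^ 2 + 16 * q 2 ^ 2 ≠ 0 := by positivity
  have h (j : Fin 6) : HasFDerivAt (fun p : Fin 6 → ℝ => p j)
      (ContinuousLinearMap.proj (R := ℝ) (φ := fun _ : Fin 6 => ℝ) j) q := hasFDerivAt_apply j q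
  have hR := ((h 0).pow 2).add ((h 1).pow 2)
  have hρ := ((h 0).mul (h 3)).add ((h 1).mul (h 4))
  -- `1 + (y/x)² = r/x²` and `1 + (4z/r)² = D/r²` clear the denominators coming from `arctan`.
  have e1 : 1 + (q 1 / q 0) ^ 2 = (q 0 ^ 2 + q 1 ^ 2) / q 0 ^ 2 := by field_simp
  have e2 : 1 + (4 * q 2 / (q 0 ^ 2 + q 1 ^ 2)) ^ 2
      = ((q 0 ^ 2 + q 1 ^ 2) ^ 2 + 16 * q 2 ^ 2) / (q 0 ^ 2 + q 1 ^ 2) ^ 2 := by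
    field_simp; ring
  rw [hasFDerivAt_pi']
  intro i
  fin_cases i
  · refine ((((hR.pow 2).add (((h 2).pow 2).const_mul 16)).log hD).const_mul (1 / 4)).congr_fderiv ?_
    ext v
    simp [jacPhi, Matrix.toLin'_apply, dotProduct, Fin.sum_univ_six]
    field_simp
    ring
  · refine (hasFDerivAt_quotient (h 1) (h 0) hx).arctan.congr_fderiv ?_
    ext v
    simp [jacPhi, Matrix.toLin'_apply, dotProduct, Fin.sum_univ_six, e1]
    field_simp
    ring
  · refine (hasFDerivAt_quotient ((h 2).const_mul 4) hR hr).arctan.congr_fderiv ?_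
    ext v
    simp [jacPhi, Matrix.toLin'_apply, dotProduct, Fin.sum_univ_six, e2]
    field_simp
    ring
  · refine (hρ.add (((h 2).const_mul 2).mul (h 5))).congr_fderiv ?_
    ext v
    simp [jacPhi, Matrix.toLin'_apply, dotProduct, Fin.sum_univ_six]
    ring
  · refine (((h 0).mul (h 4)).sub ((h 1).mul (h 3))).congr_fderiv ?_
    ext v
    simp [jacPhi, Matrix.toLin'_apply, dotProduct, Fin.sum_univ_six]
    ring
  · refine ((((h 5).const_mul (1 / 4)).mul hR).sub
      (hasFDerivAt_quotient (((h 2).const_mul 2).mul hρ) hR hr)).congr_fderiv ?_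
    ext v
    simp [jacPhi, Matrix.toLin'_apply, dotProduct, Fin.sum_univ_six]
    field_simp
    ring

theorem jacPhi_symplectic (x y z px py pz r D ρ : ℝ) (hr : r ≠ 0) (hD : D ≠ 0)
    (er : r = x ^ 2 + y ^ 2) (eD : D = r ^ 2 + 16 * z ^ 2) (eρ : ρ = x * px + y * py) :
    (jacPhi x y z px py pz r D ρ).transpose * Omega6 * jacPhi x y z px py pz r D ρ = Omega6 := by
  ext i j
  fin_cases i <;> fin_cases j <;>
    simp [jacPhi, Omega6, Matrix.mul_apply, Fin.sum_univ_six] <;>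
    (try field_simp) <;> subst eρ <;> subst eD <;> subst er <;> ring

/-- The adapted coordinates are canonical: on `{x > 0}` the map `Φ` is differentiable and
its Jacobian `DΦ` satisfies `DΦᵀ·Ω·DΦ = Ω`. -/
theorem kepler_heisenberg_canonical_coords :
    ∀ q : Fin 6 → ℝ, q 0 > 0 →
      DifferentiableAt ℝ Phi q ∧
      Matrix.transpose (LinearMap.toMatrix' (fderiv ℝ Phi q).toLinearMap) * Omega6 *
          LinearMap.toMatrix' (fderiv ℝ Phi q).toLinearMap = Omega6 := by
  intro q hq
  have h := hasFDerivAt_Phi q hq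
  refine ⟨h.differentiableAt, ?_⟩
  rw [h.fderiv, LinearMap.coe_toContinuousLinearMap, LinearMap.toMatrix'_toLin']
  exact jacPhi_symplectic _ _ _ _ _ _ _ _ _ (by positivity) (by positivity) rfl rfl rfl
end

section
/- Let c : I → ℝ^6 be a solution of the Kepler–Heisenberg Hamilton equations with H(c(t)) = 0 for all t ∈ I and (x(t), y(t)) ≠ (0, 0) for all t ∈ I, and suppose z has consecutive zeros t₀ < t₁ < t₂. Let λ = exp(s(t₂) − s(t₀)) and φ = θ(t₂) − θ(t₀). Then the endpoint of the fundamental domain is the image of the start point under dilation and rotation: c(t₂) = ρ_φ(δ_λ(c(t₀))). -/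
/-!
At zero energy the dilational momentum `J` is conserved (its derivative along any solution is
`2H`), and the angular momentum `p_θ` is conserved by rotational symmetry. Put
`w = p_θ + (x² + y²) p_z / 2`, so that `z' = w / 2`. At a zero of `z` the energy relation reads
`J² + w² = 1/(4π)`, hence `w²` takes the same value at all zeros of `z`. Between consecutive
zeros `z` has constant sign, so the one-sided slopes at the two ends have opposite (weak) signs
(`slopes_opposite`); two such steps give `w(t₂) = w(t₀)`. Now `J`, `p_θ` and `w` agree at `t₀` and
`t₂`, and together with `(x, y)` they determine all momenta, in a way that is equivariant under
dilations and rotations. No uniqueness theorem for the differential equation is needed.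
-/

open Real Set

/-! ### Hamilton's equations in explicit form -/

/-- The quantity `w = p_θ + (x² + y²) p_z / 2`, which equals `2 z'` along solutions. -/
noncomputable def wMom (x y px py pz : ℝ) : ℝ := pTheta x y px py + (x^2 + y^2) * pz / 2

lemma hasDerivAt_potential_s14 {f : ℝ → ℝ} {f' a : ℝ} (hf : HasDerivAt f f' a) (h : 0 < f a) :
    HasDerivAt (fun t => 1 / (8 * π * Real.sqrt (f t)))
      (-(f' / (16 * π * f a * Real.sqrt (f a)))) a := by
  have hs : 0 < Real.sqrt (f a) := Real.sqrt_pos.mpr h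
  have h1 := ((hf.sqrt h.ne').const_mul (8 * π)).inv (by positivity)
  have e : (fun t => 1 / (8 * π * Real.sqrt (f t))) = (fun t => 8 * π * Real.sqrt (f t))⁻¹ := by
    funext t; simp
  rw [e]
  refine h1.congr_deriv ?_
  have h2 : f a = Real.sqrt (f a) ^ 2 := (Real.sq_sqrt h.le).symm
  generalize Real.sqrt (f a) = r at *
  rw [h2]
  field_simp
  ring

section Hamilton

variable (x y z px py pz : ℝ)

lemma deriv_KH_px : deriv (fun a => KH x y z a py pz) px = px - (1/2) * y * pz := by
  unfold KH
  refine HasDerivAt.deriv ?_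
  refine HasDerivAt.congr_deriv (((((((hasDerivAt_id' px).sub_const ((1/2) * y * pz)).pow 2).add_const
    ((py + (1/2) * x * pz)^2)).const_mul (1/2 : ℝ)).sub_const
    (1 / (8 * π * Real.sqrt ((x^2 + y^2)^2 + 16 * z^2))))) ?_
  norm_num; ring

lemma deriv_KH_py : deriv (fun a => KH x y z px a pz) py = py + (1/2) * x * pz := by
  unfold KH
  refine HasDerivAt.deriv ?_
  refine HasDerivAt.congr_deriv (((((((hasDerivAt_id' py).add_const ((1/2) * x * pz)).pow 2).const_add
    ((px - (1/2) * y * pz)^2)).const_mul (1/2 : ℝ)).sub_const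
    (1 / (8 * π * Real.sqrt ((x^2 + y^2)^2 + 16 * z^2))))) ?_
  norm_num; ring

lemma deriv_KH_pz : deriv (fun a => KH x y z px py a) pz = wMom x y px py pz / 2 := by
  unfold KH wMom pTheta
  refine HasDerivAt.deriv ?_
  refine HasDerivAt.congr_deriv ((((((((hasDerivAt_id' pz).const_mul ((1/2) * y)).const_sub px).pow 2).add
    ((((hasDerivAt_id' pz).const_mul ((1/2) * x)).const_add py).pow 2)).const_mul
    (1/2 : ℝ)).sub_const
    (1 / (8 * π * Real.sqrt ((x^2 + y^2)^2 + 16 * z^2))))) ?_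
  norm_num; ring

variable {x y z}

lemma deriv_KH_x (h : 0 < (x^2 + y^2)^2 + 16 * z^2) :
    deriv (fun a => KH a y z px py pz) x =
    (1/2) * pz * (py + (1/2) * x * pz) + 4 * x * (x^2 + y^2) /
      (16 * π * ((x^2 + y^2)^2 + 16 * z^2) * Real.sqrt ((x^2 + y^2)^2 + 16 * z^2)) := by
  unfold KH
  refine HasDerivAt.deriv ?_
  have hf : HasDerivAt (fun a : ℝ => (a^2 + y^2)^2 + 16 * z^2) (4 * x * (x^2 + y^2)) x := by
    refine HasDerivAt.congr_deriv (((((hasDerivAt_id' x).pow 2).add_const (y^2)).pow 2).add_const (16 * z^2)) ?_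
    norm_num; ring
  refine HasDerivAt.congr_deriv (((((((((hasDerivAt_id' x).const_mul (1/2 : ℝ)).mul_const pz).const_add py).pow 2).const_add
    ((px - (1/2) * y * pz)^2)).const_mul (1/2 : ℝ)).sub (hasDerivAt_potential_s14 hf h))) ?_
  norm_num; ring

lemma deriv_KH_y (h : 0 < (x^2 + y^2)^2 + 16 * z^2) :
    deriv (fun a => KH x a z px py pz) y =
    -((1/2) * pz * (px - (1/2) * y * pz)) + 4 * y * (x^2 + y^2) /
      (16 * π * ((x^2 + y^2)^2 + 16 * z^2) * Real.sqrt ((x^2 + y^2)^2 + 16 * z^2)) := by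
  unfold KH
  refine HasDerivAt.deriv ?_
  have hf : HasDerivAt (fun a : ℝ => (x^2 + a^2)^2 + 16 * z^2) (4 * y * (x^2 + y^2)) y := by
    refine HasDerivAt.congr_deriv (((((hasDerivAt_id' y).pow 2).const_add (x^2)).pow 2).add_const (16 * z^2)) ?_
    norm_num; ring
  refine HasDerivAt.congr_deriv (((((((((hasDerivAt_id' y).const_mul (1/2 : ℝ)).mul_const pz).const_sub px).pow 2).add_const
    ((py + (1/2) * x * pz)^2)).const_mul (1/2 : ℝ)).sub (hasDerivAt_potential_s14 hf h))) ?_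
  norm_num; ring

lemma deriv_KH_z (h : 0 < (x^2 + y^2)^2 + 16 * z^2) :
    deriv (fun a => KH x y a px py pz) z =
    32 * z /
      (16 * π * ((x^2 + y^2)^2 + 16 * z^2) * Real.sqrt ((x^2 + y^2)^2 + 16 * z^2)) := by
  unfold KH
  refine HasDerivAt.deriv ?_
  have hf : HasDerivAt (fun a : ℝ => (x^2 + y^2)^2 + 16 * a^2) (32 * z) z := by
    refine HasDerivAt.congr_deriv ((((hasDerivAt_id' z).pow 2).const_mul (16 : ℝ)).const_add ((x^2 + y^2)^2)) ?_
    norm_num; ring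
  refine HasDerivAt.congr_deriv ((hasDerivAt_potential_s14 hf h).const_sub
    ((1/2) * ((px - (1/2) * y * pz)^2 + (py + (1/2) * x * pz)^2))) ?_
  norm_num

/-- Euler's identity for the dilation weights: `{J, H} = 2H`. -/
lemma J_bracket (h : 0 < (x^2 + y^2)^2 + 16 * z^2) :
    (px - (1/2) * y * pz) * px + (py + (1/2) * x * pz) * py + 2 * (wMom x y px py pz / 2) * pz
      - x * deriv (fun a => KH a y z px py pz) x - y * deriv (fun a => KH x a z px py pz) y
      - 2 * z * deriv (fun a => KH x y a px py pz) z = 2 * KH x y z px py pz := by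
  rw [deriv_KH_x _ _ _ h, deriv_KH_y _ _ _ h, deriv_KH_z _ _ _ h]
  unfold KH wMom pTheta
  have hs : 0 < Real.sqrt ((x^2 + y^2)^2 + 16 * z^2) := Real.sqrt_pos.mpr h
  generalize Real.sqrt ((x^2 + y^2)^2 + 16 * z^2) = r at *
  have h' := h.ne'
  field_simp
  ring

end Hamilton

/-! ### Slopes at consecutive zeros -/

/-- A function that vanishes at both ends of an interval and nowhere inside has end slopes of
opposite weak signs. -/
lemma slopes_opposite {f : ℝ → ℝ} {a b f'a f'b : ℝ} (hab : a < b)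
    (hc : ContinuousOn f (Icc a b)) (ha : f a = 0) (hb : f b = 0)
    (hda : HasDerivAt f f'a a) (hdb : HasDerivAt f f'b b)
    (hne : ∀ t, a < t → t < b → f t ≠ 0) : f'a * f'b ≤ 0 := by
  have key : ∀ {g : ℝ → ℝ} {g'a g'b : ℝ}, g a = 0 → g b = 0 → HasDerivAt g g'a a →
      HasDerivAt g g'b b → (∀ t ∈ Ioo a b, 0 < g t) → g'a * g'b ≤ 0 := by
    intro g g'a g'b ga gb da db hpos
    refine mul_nonpos_of_nonneg_of_nonpos ?_ ?_
    · refine ge_of_tendsto (da.tendsto_slope.mono_left (nhdsGT_le_nhdsNE a)) ?_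
      filter_upwards [Ioo_mem_nhdsGT hab] with t ht
      rw [slope_def_field, ga]
      have := hpos t ht
      have := ht.1
      exact div_nonneg (by linarith) (by linarith)
    · refine le_of_tendsto (db.tendsto_slope.mono_left (nhdsLT_le_nhdsNE b)) ?_
      filter_upwards [Ioo_mem_nhdsLT hab] with t ht
      rw [slope_def_field, gb]
      have := hpos t ht
      have := ht.2
      exact div_nonpos_of_nonneg_of_nonpos (by linarith) (by linarith)
  have hc' : ContinuousOn f (Ioo a b) := hc.mono Ioo_subset_Icc_self
  have hsign : (∀ t ∈ Ioo a b, 0 < f t) ∨ (∀ t ∈ Ioo a b, f t < 0) := by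
    by_contra! hcon
    obtain ⟨⟨s, hs, hs'⟩, ⟨t, ht, ht'⟩⟩ := hcon
    obtain ⟨r, hr, hr0⟩ := isPreconnected_Ioo.intermediate_value hs ht hc' ⟨hs', ht'⟩
    exact hne r hr.1 hr.2 hr0
  rcases hsign with hp | hn
  · exact key ha hb hda hdb hp
  · have := key (g := -f) (by simp [ha]) (by simp [hb]) hda.neg hdb.neg
      (fun t ht => by simpa using hn t ht)
    simpa using this

/-! ### Phase points on the plane `z = 0` -/

/-- The zero-energy relation on the plane `z = 0`. -/
lemma energy_at_zero {x y px py pz : ℝ} (hr : 0 < x^2 + y^2) (h : KH x y 0 px py pz = 0) :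
    Jmom x y 0 px py pz ^ 2 + wMom x y px py pz ^ 2 = 1 / (4 * π) := by
  unfold KH at h
  have e : Real.sqrt ((x^2 + y^2)^2 + 16 * 0^2) = x^2 + y^2 := by
    rw [show (x^2 + y^2)^2 + 16 * (0:ℝ)^2 = (x^2 + y^2)^2 by ring]
    exact Real.sqrt_sq hr.le
  rw [e] at h
  unfold Jmom wMom pTheta
  field_simp at h ⊢
  linear_combination h / 2

/-- Momenta on the plane `z = 0`, recovered from the position and `J`, `p_θ`, `w`. -/
lemma momenta_at_zero {x y px py pz : ℝ} (hr : 0 < x^2 + y^2) :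
    px = (x * Jmom x y 0 px py pz - y * pTheta x y px py) / (x^2 + y^2) ∧
    py = (y * Jmom x y 0 px py pz + x * pTheta x y px py) / (x^2 + y^2) ∧
    pz = 2 * (wMom x y px py pz - pTheta x y px py) / (x^2 + y^2) := by
  unfold Jmom wMom pTheta
  refine ⟨?_, ?_, ?_⟩ <;> (field_simp; ring)

/-- Two points of the plane `z = 0` with the same `J`, `p_θ`, `w` and positions related by a
dilation and a rotation are related by the lifted dilation and rotation. -/
lemma lift_at_zero {x₀ y₀ px₀ py₀ pz₀ x₂ y₂ px₂ py₂ pz₂ l φ : ℝ} (hl : 0 < l)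
    (hr₀ : 0 < x₀^2 + y₀^2)
    (hx : x₂ = l * x₀ * Real.cos φ - l * y₀ * Real.sin φ)
    (hy : y₂ = l * x₀ * Real.sin φ + l * y₀ * Real.cos φ)
    (hJ : Jmom x₂ y₂ 0 px₂ py₂ pz₂ = Jmom x₀ y₀ 0 px₀ py₀ pz₀)
    (hP : pTheta x₂ y₂ px₂ py₂ = pTheta x₀ y₀ px₀ py₀)
    (hw : wMom x₂ y₂ px₂ py₂ pz₂ = wMom x₀ y₀ px₀ py₀ pz₀) :
    (x₂, y₂, (0:ℝ), px₂, py₂, pz₂) = rot φ (dil l (x₀, y₀, 0, px₀, py₀, pz₀)) := by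
  have hr : x₂^2 + y₂^2 = l^2 * (x₀^2 + y₀^2) := by
    rw [hx, hy]
    linear_combination (l^2 * (x₀^2 + y₀^2)) * Real.sin_sq_add_cos_sq φ
  obtain ⟨a0, b0, c0⟩ := momenta_at_zero (px := px₀) (py := py₀) (pz := pz₀) hr₀
  obtain ⟨a2, b2, c2⟩ := momenta_at_zero (px := px₂) (py := py₂) (pz := pz₂)
    (show 0 < x₂^2 + y₂^2 by rw [hr]; positivity)
  rw [hJ, hP, hr] at a2 b2
  rw [hw, hP, hr] at c2
  generalize Jmom x₀ y₀ 0 px₀ py₀ pz₀ = J at *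
  generalize pTheta x₀ y₀ px₀ py₀ = P at *
  generalize wMom x₀ y₀ px₀ py₀ pz₀ = w at *
  simp only [rot, dil, Prod.mk.injEq]
  refine ⟨hx, hy, by simp, ?_, ?_, ?_⟩
  · rw [a2, a0, b0, hx, hy]; field_simp; ring
  · rw [b2, a0, b0, hx, hy]; field_simp; ring
  · rw [c2, c0]; field_simp

/-! ### Comparison of the endpoints -/

/-- **Lemma (endpoints of a fundamental domain).** For a zero-energy solution avoiding the
`z`-axis with consecutive zeros `t₀ < t₁ < t₂` of `z`, with `λ = exp(s(t₂) − s(t₀))` and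
`φ = θ(t₂) − θ(t₀)`, one has `c(t₂) = ρ_φ(δ_λ(c(t₀)))`. -/
theorem kepler_heisenberg_fundamental_domain_endpoints
    (I : Set ℝ) (x y z px py pz θ : ℝ → ℝ) (t₀ t₁ t₂ : ℝ)
    (hsol : IsSolutionOn I x y z px py pz)
    (hH : ∀ t ∈ I, KH (x t) (y t) (z t) (px t) (py t) (pz t) = 0)
    (hxy : ∀ t ∈ I, (x t, y t) ≠ (0, 0))
    (hθcont : ContinuousOn θ I)
    (hθ : ∀ t ∈ I, x t = Real.sqrt ((x t)^2 + (y t)^2) * Real.cos (θ t) ∧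
                   y t = Real.sqrt ((x t)^2 + (y t)^2) * Real.sin (θ t))
    (ht01 : t₀ < t₁) (ht12 : t₁ < t₂)
    (ht₀I : t₀ ∈ I) (ht₁I : t₁ ∈ I) (ht₂I : t₂ ∈ I)
    (hz₀ : z t₀ = 0) (hz₁ : z t₁ = 0) (hz₂ : z t₂ = 0)
    (hconsec : ∀ t, ((t₀ < t ∧ t < t₁) ∨ (t₁ < t ∧ t < t₂)) → z t ≠ 0)
    (lam φ : ℝ)
    (hlam : lam = Real.exp (sCoord (x t₂) (y t₂) (z t₂) - sCoord (x t₀) (y t₀) (z t₀)))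
    (hφ : φ = θ t₂ - θ t₀) :
    (x t₂, y t₂, z t₂, px t₂, py t₂, pz t₂) =
      rot φ (dil lam (x t₀, y t₀, z t₀, px t₀, py t₀, pz t₀)) := by
  obtain ⟨-, hconn, -, -, hode⟩ := hsol
  have hr : ∀ t ∈ I, 0 < (x t)^2 + (y t)^2 := by
    intro t ht
    by_contra hcon
    have hx0 : x t = 0 := by nlinarith [sq_nonneg (x t), sq_nonneg (y t)]
    have hy0 : y t = 0 := by nlinarith [sq_nonneg (x t), sq_nonneg (y t)]
    exact hxy t ht (by rw [hx0, hy0])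
  have hN : ∀ t ∈ I, 0 < ((x t)^2 + (y t)^2)^2 + 16 * (z t)^2 := by
    intro t ht
    have := hr t ht
    positivity
  have hsub : Icc t₀ t₂ ⊆ I := hconn.out ht₀I ht₂I
  have hz' : ∀ t ∈ I, HasDerivAt z (wMom (x t) (y t) (px t) (py t) (pz t) / 2) t := by
    intro t ht
    have := (hode t ht).2.2.1
    rwa [deriv_KH_pz] at this
  have hJ' : ∀ t ∈ I,
      HasDerivAt (fun t => Jmom (x t) (y t) (z t) (px t) (py t) (pz t)) 0 t := by
    intro t ht
    obtain ⟨h1, h2, h3, h4, h5, h6⟩ := hode t ht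
    have hb := J_bracket (px t) (py t) (pz t) (hN t ht)
    rw [hH t ht] at hb
    have := ((h1.mul h4).add (h2.mul h5)).add ((h3.const_mul 2).mul h6)
    unfold Jmom
    refine this.congr_deriv ?_
    rw [deriv_KH_px, deriv_KH_py, deriv_KH_pz]
    linear_combination hb
  have hP' : ∀ t ∈ I, HasDerivAt (fun t => pTheta (x t) (y t) (px t) (py t)) 0 t := by
    intro t ht
    obtain ⟨h1, h2, h3, h4, h5, h6⟩ := hode t ht
    have := (h1.mul h5).sub (h2.mul h4)
    unfold pTheta
    refine this.congr_deriv ?_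
    rw [deriv_KH_px, deriv_KH_py, deriv_KH_x _ _ _ (hN t ht), deriv_KH_y _ _ _ (hN t ht)]
    ring
  have hconst : ∀ f : ℝ → ℝ, (∀ t ∈ I, HasDerivAt f 0 t) → ∀ t ∈ Icc t₀ t₂, f t = f t₀ := by
    intro f hf
    exact constant_of_has_deriv_right_zero
      (fun t ht => (hf t (hsub ht)).continuousAt.continuousWithinAt)
      (fun t ht => (hf t (hsub (Ico_subset_Icc_self ht))).hasDerivWithinAt)
  have hJc := hconst _ hJ'
  have hPc := hconst _ hP'
  have hJ1 := hJc t₁ ⟨ht01.le, ht12.le⟩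
  have hJ2 := hJc t₂ ⟨(ht01.trans ht12).le, le_rfl⟩
  have hP2 := hPc t₂ ⟨(ht01.trans ht12).le, le_rfl⟩
  have hs : ∀ a b, a ∈ I → b ∈ I → ContinuousOn z (Icc a b) := fun a b ha hb t ht =>
    (hz' t (hconn.out ha hb ht)).continuousAt.continuousWithinAt
  have o1 := slopes_opposite ht01 (hs _ _ ht₀I ht₁I) hz₀ hz₁ (hz' _ ht₀I) (hz' _ ht₁I)
    (fun t h h' => hconsec t (Or.inl ⟨h, h'⟩))
  have o2 := slopes_opposite ht12 (hs _ _ ht₁I ht₂I) hz₁ hz₂ (hz' _ ht₁I) (hz' _ ht₂I)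
    (fun t h h' => hconsec t (Or.inr ⟨h, h'⟩))
  have e0 := hH t₀ ht₀I
  have e1 := hH t₁ ht₁I
  have e2 := hH t₂ ht₂I
  simp only [hz₀, hz₁, hz₂] at e0 e1 e2 hJ1 hJ2 hP2 hlam ⊢
  have E0 := energy_at_zero (hr _ ht₀I) e0
  have E1 := energy_at_zero (hr _ ht₁I) e1
  have E2 := energy_at_zero (hr _ ht₂I) e2
  rw [hJ1] at E1
  rw [hJ2] at E2
  have hw : wMom (x t₂) (y t₂) (px t₂) (py t₂) (pz t₂) =
      wMom (x t₀) (y t₀) (px t₀) (py t₀) (pz t₀) := by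
    generalize wMom (x t₀) (y t₀) (px t₀) (py t₀) (pz t₀) = w0 at *
    generalize wMom (x t₁) (y t₁) (px t₁) (py t₁) (pz t₁) = w1 at *
    generalize wMom (x t₂) (y t₂) (px t₂) (py t₂) (pz t₂) = w2 at *
    have q1 : w1 ^ 2 = w0 ^ 2 := by linarith
    have q2 : w2 ^ 2 = w0 ^ 2 := by linarith
    rcases sq_eq_sq_iff_eq_or_eq_neg.mp q2 with h | h
    · exact h
    · subst h
      -- Here `w₂ = -w₀`, so both sign conditions force `w₀ w₁ = 0`.
      have h0 : w0 * w1 = 0 := by linarith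
      have h1 : w0 ^ 2 * w0 ^ 2 = 0 := by
        linear_combination (w0 * w1) * h0 - w0 ^ 2 * q1
      have : w0 = 0 := by simpa using h1
      simp [this]
  have hl : lam * Real.sqrt ((x t₀)^2 + (y t₀)^2) = Real.sqrt ((x t₂)^2 + (y t₂)^2) := by
    have e : ∀ a b : ℝ, 0 < a^2 + b^2 →
        Real.exp (sCoord a b 0) = Real.sqrt (a^2 + b^2) := by
      intro a b h
      rw [← Real.exp_log (Real.sqrt_pos.mpr h), Real.log_sqrt h.le]
      unfold sCoord
      rw [show (a^2 + b^2)^2 + 16 * (0:ℝ)^2 = (a^2 + b^2)^2 by ring, Real.log_pow]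
      congr 1
      push_cast
      ring
    rw [hlam, Real.exp_sub, e _ _ (hr _ ht₀I), e _ _ (hr _ ht₂I)]
    exact div_mul_cancel₀ _ (Real.sqrt_pos.mpr (hr _ ht₀I)).ne'
  have hθ2 : θ t₂ = θ t₀ + φ := by rw [hφ]; ring
  obtain ⟨hx0, hy0⟩ := hθ t₀ ht₀I
  obtain ⟨hx2, hy2⟩ := hθ t₂ ht₂I
  rw [hθ2, ← hl] at hx2 hy2
  rw [Real.cos_add] at hx2
  rw [Real.sin_add] at hy2
  refine lift_at_zero (by rw [hlam]; exact Real.exp_pos _) (hr _ ht₀I) ?_ ?_ hJ2 hP2 hw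
  · linear_combination hx2 - lam * Real.cos φ * hx0 + lam * Real.sin φ * hy0
  · linear_combination hy2 - lam * Real.sin φ * hx0 - lam * Real.cos φ * hy0
end
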